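/- Mixed substitution lemma: for every μLTL formula φ(X), every closed RLL expression χ (with the expanded μLTL syntax admitting every subset of ω as a constant), and every ω-word σ, (φ(L(χ)))^σ ⊆ (φ(χ°))^σ, where L(χ) is treated as a constant A ⊆ A^ω interpreted by A^σ := {n ∈ ω | σⁿ ∈ A} with σⁿ the n-th tail of σ. -/

import Mathlib

namespace RLLPaper

/-- Right-linear lattice (RLL) expressions over an alphabet `A`,
with de Bruijn indices for variables. -/
inductive Expr (A : Type) : Type
  | var : ℕ → Expr A
  | act : A → Expr A → Expr A
  | plus : Expr A → Expr A → Expr A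
  | inter : Expr A → Expr A → Expr A
  | mu : Expr A → Expr A
  | nu : Expr A → Expr A

namespace Expr

variable {A : Type}

/-- The expression `0 := μX X`. -/
def zero (A : Type) : Expr A := mu (var 0)

/-- The expression `⊤ := νX X`. -/
def top (A : Type) : Expr A := nu (var 0)

/-- Renaming of (free) de Bruijn variables. -/
def rename : (ℕ → ℕ) → Expr A → Expr A
  | r, var n => var (r n)
  | r, act a e => act a (rename r e)
  | r, plus e f => plus (rename r e) (rename r f)
  | r, inter e f => inter (rename r e) (rename r f)
  | r, mu e => mu (rename (fun n => match n with | 0 => 0 | m+1 => r m + 1) e)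
  | r, nu e => nu (rename (fun n => match n with | 0 => 0 | m+1 => r m + 1) e)

/-- Parallel (capture-avoiding) substitution. -/
def msubst : (ℕ → Expr A) → Expr A → Expr A
  | τ, var n => τ n
  | τ, act a e => act a (msubst τ e)
  | τ, plus e f => plus (msubst τ e) (msubst τ f)
  | τ, inter e f => inter (msubst τ e) (msubst τ f)
  | τ, mu e => mu (msubst (fun n => match n with | 0 => var 0 | m+1 => rename (· + 1) (τ m)) e)
  | τ, nu e => nu (msubst (fun n => match n with | 0 => var 0 | m+1 => rename (· + 1) (τ m)) e)

/-- Substitution of `g` for the variable bound at de Bruijn index `0`: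
`e(g)` when `e` has distinguished free variable `0`. -/
def subst0 (g : Expr A) (e : Expr A) : Expr A :=
  msubst (fun n => match n with | 0 => g | m+1 => var m) e

/-- The de Bruijn variable `n` occurs free in an expression. -/
def FreeIn : ℕ → Expr A → Prop
  | n, var m => n = m
  | n, act _ e => FreeIn n e
  | n, plus e f => FreeIn n e ∨ FreeIn n f
  | n, inter e f => FreeIn n e ∨ FreeIn n f
  | n, mu e => FreeIn (n+1) e
  | n, nu e => FreeIn (n+1) e

/-- All free variables of the expression are `< k`. -/
def ClosedAbove : Expr A → ℕ → Prop
  | var n, k => n < k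
  | act _ e, k => ClosedAbove e k
  | plus e f, k => ClosedAbove e k ∧ ClosedAbove f k
  | inter e f, k => ClosedAbove e k ∧ ClosedAbove f k
  | mu e, k => ClosedAbove e (k+1)
  | nu e, k => ClosedAbove e (k+1)

/-- An expression is closed if it has no free variables. -/
def Closed (e : Expr A) : Prop := ClosedAbove e 0

/-- A finite sum `Σ` of expressions (with `0` for the empty sum). -/
def listSum (l : List (Expr A)) : Expr A := l.foldr plus (zero A)

/-- The syntactic complement `eᶜ` of an RLL expression:
`Xᶜ = X`, `(a·e)ᶜ = a·eᶜ + Σ_{b ≠ a} b·⊤`, `(e+f)ᶜ = eᶜ ∩ fᶜ`,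
`(e∩f)ᶜ = eᶜ + fᶜ`, `(μX e)ᶜ = νX eᶜ`, `(νX e)ᶜ = μX eᶜ`. -/
noncomputable def compl [Fintype A] [DecidableEq A] : Expr A → Expr A
  | var n => var n
  | act a e => plus (act a (compl e))
      (listSum ((((Finset.univ : Finset A).erase a).toList).map (fun b => act b (top A))))
  | plus e f => inter (compl e) (compl f)
  | inter e f => plus (compl e) (compl f)
  | mu e => nu (compl e)
  | nu e => mu (compl e)

end Expr

end RLLPaper
namespace RLLPaper

namespace Expr

variable {A : Type}

/-- The language interpretation of an RLL expression, relative to an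
environment `ρ` assigning languages of ω-words to the free variables.
`μ` is interpreted as the intersection of all prefixed points, `ν` as the
union of all postfixed points (the least/greatest fixed points, by
Knaster-Tarski). -/
def Lang : Expr A → (ℕ → Set (Stream' A)) → Set (Stream' A)
  | var n, ρ => ρ n
  | act a e, ρ => Stream'.cons a '' Lang e ρ
  | plus e f, ρ => Lang e ρ ∪ Lang f ρ
  | inter e f, ρ => Lang e ρ ∩ Lang f ρ
  | mu e, ρ => ⋂₀ {S | Lang e (fun n => match n with | 0 => S | m+1 => ρ m) ⊆ S}
  | nu e, ρ => ⋃₀ {S | S ⊆ Lang e (fun n => match n with | 0 => S | m+1 => ρ m)}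

/-- The language of a (closed) RLL expression. -/
def lang (e : Expr A) : Set (Stream' A) := Lang e (fun _ => ∅)

end Expr

end RLLPaper
namespace RLLPaper

/-- Formulas of the linear-time μ-calculus `μLTL` over propositional letters
from `P`, in negation normal form, with de Bruijn indices for variables. -/
inductive LTL (P : Type) : Type
  | bot : LTL P
  | top : LTL P
  | pos : P → LTL P
  | neg : P → LTL P
  | var : ℕ → LTL P
  | or : LTL P → LTL P → LTL P
  | and : LTL P → LTL P → LTL P
  | next : LTL P → LTL P
  | mu : LTL P → LTL P
  | nu : LTL P → LTL P

namespace LTL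

variable {P : Type}

/-- Renaming of free de Bruijn variables of a μLTL formula. -/
def rename : (ℕ → ℕ) → LTL P → LTL P
  | _, bot => bot
  | _, top => top
  | _, pos p => pos p
  | _, neg p => neg p
  | r, var n => var (r n)
  | r, or φ ψ => or (rename r φ) (rename r ψ)
  | r, and φ ψ => and (rename r φ) (rename r ψ)
  | r, next φ => next (rename r φ)
  | r, mu φ => mu (rename (fun n => match n with | 0 => 0 | m+1 => r m + 1) φ)
  | r, nu φ => nu (rename (fun n => match n with | 0 => 0 | m+1 => r m + 1) φ)

/-- Parallel capture-avoiding substitution for μLTL formulas. -/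
def msubst : (ℕ → LTL P) → LTL P → LTL P
  | _, bot => bot
  | _, top => top
  | _, pos p => pos p
  | _, neg p => neg p
  | τ, var n => τ n
  | τ, or φ ψ => or (msubst τ φ) (msubst τ ψ)
  | τ, and φ ψ => and (msubst τ φ) (msubst τ ψ)
  | τ, next φ => next (msubst τ φ)
  | τ, mu φ => mu (msubst (fun n => match n with | 0 => var 0 | m+1 => rename (· + 1) (τ m)) φ)
  | τ, nu φ => nu (msubst (fun n => match n with | 0 => var 0 | m+1 => rename (· + 1) (τ m)) φ)

/-- Substitution `φ(χ)` of `χ` for the variable bound at de Bruijn index 0. -/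
def subst0 (χ : LTL P) (φ : LTL P) : LTL P :=
  msubst (fun n => match n with | 0 => χ | m+1 => var m) φ

/-- Negation, extended to all formulas by De Morgan duality,
with `◯` self-dual. -/
def negF : LTL P → LTL P
  | bot => top
  | top => bot
  | pos p => neg p
  | neg p => pos p
  | var n => var n
  | or φ ψ => and (negF φ) (negF ψ)
  | and φ ψ => or (negF φ) (negF ψ)
  | next φ => next (negF φ)
  | mu φ => nu (negF φ)
  | nu φ => mu (negF φ)

/-- Implication macro `φ → ψ := ¬φ ∨ ψ`. -/
def impF (φ ψ : LTL P) : LTL P := or (negF φ) ψ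

/-- Bi-implication macro. -/
def iffF (φ ψ : LTL P) : LTL P := and (impF φ ψ) (impF ψ φ)

/-- Semantics of μLTL over the ω-word `σ ∈ (P(𝐏))^ω` (the canonical linear
Kripke structure), relative to an environment `ρ` for the free variables:
`φ^σ ⊆ ω` is the set of time points at which `φ` holds. -/
def sem : LTL P → Stream' (Finset P) → (ℕ → Set ℕ) → Set ℕ
  | bot, _, _ => ∅
  | top, _, _ => Set.univ
  | pos p, σ, _ => {n | p ∈ σ.get n}
  | neg p, σ, _ => {n | p ∉ σ.get n}
  | var n, _, ρ => ρ n
  | or φ ψ, σ, ρ => sem φ σ ρ ∪ sem ψ σ ρ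
  | and φ ψ, σ, ρ => sem φ σ ρ ∩ sem ψ σ ρ
  | next φ, σ, ρ => {n | n + 1 ∈ sem φ σ ρ}
  | mu φ, σ, ρ => ⋂₀ {S | sem φ σ (fun n => match n with | 0 => S | m+1 => ρ m) ⊆ S}
  | nu φ, σ, ρ => ⋃₀ {S | S ⊆ sem φ σ (fun n => match n with | 0 => S | m+1 => ρ m)}

/-- `σ ⊨ φ` iff `0 ∈ φ^σ` (for closed `φ`). -/
def Sat (σ : Stream' (Finset P)) (φ : LTL P) : Prop := 0 ∈ sem φ σ (fun _ => ∅)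

/-- A finite conjunction `⋀` of formulas. -/
def bigAnd (l : List (LTL P)) : LTL P := l.foldr and top

end LTL

/-- Classical propositional formulas (used to state "all propositional
tautologies" as an axiom scheme of the μLTL Hilbert system). -/
inductive PF : Type
  | pvar : ℕ → PF
  | bot : PF
  | top : PF
  | disj : PF → PF → PF
  | conj : PF → PF → PF
  | pneg : PF → PF

namespace PF

/-- Boolean evaluation of a propositional formula. -/
def eval : (ℕ → Bool) → PF → Bool
  | v, pvar n => v n
  | _, bot => false
  | _, top => true
  | v, disj p q => eval v p || eval v q
  | v, conj p q => eval v p && eval v q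
  | v, pneg p => ! eval v p

/-- A propositional tautology. -/
def Taut (p : PF) : Prop := ∀ v, eval v p = true

/-- Substitution of μLTL formulas into a propositional formula
(negation is interpreted via De Morgan negation `negF`). -/
def substLTL {P : Type} (s : ℕ → LTL P) : PF → LTL P
  | pvar n => s n
  | bot => LTL.bot
  | top => LTL.top
  | disj p q => LTL.or (substLTL s p) (substLTL s q)
  | conj p q => LTL.and (substLTL s p) (substLTL s q)
  | pneg p => LTL.negF (substLTL s p)

end PF

/-- The Hilbert-style axiomatisation of μLTL: all propositional tautologies,
normality of `◯` over `∨` and `∧`, fixed-point unfolding axioms, with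
modus ponens, necessitation, induction and coinduction rules. -/
inductive LTLProves {P : Type} : LTL P → Prop
  | taut (p : PF) (s : ℕ → LTL P) : p.Taut → LTLProves (p.substLTL s)
  | next_or (φ ψ : LTL P) :
      LTLProves (LTL.iffF (.next (.or φ ψ)) (.or (.next φ) (.next ψ)))
  | next_and (φ ψ : LTL P) :
      LTLProves (LTL.iffF (.next (.and φ ψ)) (.and (.next φ) (.next ψ)))
  | mu_fold (φ : LTL P) : LTLProves (LTL.impF (LTL.subst0 (.mu φ) φ) (.mu φ))
  | nu_unfold (φ : LTL P) : LTLProves (LTL.impF (.nu φ) (LTL.subst0 (.nu φ) φ))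
  | mp {φ ψ : LTL P} : LTLProves φ → LTLProves (LTL.impF φ ψ) → LTLProves ψ
  | nec {φ : LTL P} : LTLProves φ → LTLProves (.next φ)
  | ind {φ ψ : LTL P} :
      LTLProves (LTL.impF (LTL.subst0 ψ φ) ψ) → LTLProves (LTL.impF (.mu φ) ψ)
  | coind {φ ψ : LTL P} :
      LTLProves (LTL.impF ψ (LTL.subst0 ψ φ)) → LTLProves (LTL.impF ψ (.nu φ))

end RLLPaper
namespace RLLPaper

variable {P : Type} [Fintype P] [DecidableEq P]

/-- The translation `e°` of RLL expressions over the alphabet `A = P(𝐏)` into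
μLTL formulas: `X° = X`, `(a·e)° = ⋀_{p∈a} p ∧ ⋀_{p∉a} ¬p ∧ ◯e°`,
`(e+f)° = e° ∨ f°`, `(e∩f)° = e° ∧ f°`, `(μX e)° = μX e°`, `(νX e)° = νX e°`. -/
noncomputable def toLTL : Expr (Finset P) → LTL P
  | .var n => .var n
  | .act a e => .and (LTL.bigAnd (a.toList.map LTL.pos))
      (.and (LTL.bigAnd ((aᶜ : Finset P).toList.map LTL.neg)) (.next (toLTL e)))
  | .plus e f => .or (toLTL e) (toLTL f)
  | .inter e f => .and (toLTL e) (toLTL f)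
  | .mu e => .mu (toLTL e)
  | .nu e => .nu (toLTL e)

/-- The translation `φ•` of μLTL formulas into RLL expressions over the
alphabet `A = P(𝐏)`: `⊥• = 0`, `⊤• = ⊤`, `p• = Σ_{a∋p} a·⊤`,
`(¬p)• = Σ_{a∌p} a·⊤`, `X• = X`, `(φ∨ψ)• = φ•+ψ•`, `(φ∧ψ)• = φ•∩ψ•`,
`(◯φ)• = Σ_{a∈A} a·φ•`, `(μXφ)• = μX φ•`, `(νXφ)• = νX φ•`. -/
noncomputable def toRLL : LTL P → Expr (Finset P)
  | .bot => Expr.zero (Finset P)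
  | .top => Expr.top (Finset P)
  | .pos p => Expr.listSum
      ((((Finset.univ : Finset (Finset P)).filter (fun a => p ∈ a)).toList).map
        (fun a => Expr.act a (Expr.top (Finset P))))
  | .neg p => Expr.listSum
      ((((Finset.univ : Finset (Finset P)).filter (fun a => p ∉ a)).toList).map
        (fun a => Expr.act a (Expr.top (Finset P))))
  | .var n => .var n
  | .or φ ψ => .plus (toRLL φ) (toRLL ψ)
  | .and φ ψ => .inter (toRLL φ) (toRLL ψ)
  | .next φ => Expr.listSum
      (((Finset.univ : Finset (Finset P)).toList).map (fun a => Expr.act a (toRLL φ)))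
  | .mu φ => .mu (toRLL φ)
  | .nu φ => .nu (toRLL φ)

end RLLPaper

namespace RLLPaper

open Expr

/-!
Substituting a formula amounts to evaluating `φ` with the variable bound to the semantics of that
formula, and `φ ↦ φ^σ` is monotone in its environment, so it suffices to show `L(χ)^σ ⊆ (χ°)^σ`.
This goes by induction on `χ`, generalised to open expressions. Since `L ↦ L^σ` is the preimage
map of `k ↦ σᵏ`, it turns postfixed points into postfixed points, which settles `ν`; its right
adjoint turns prefixed points of the formula into prefixed points of the expression, which
settles `μ`.
-/

/-- The environment (or substitution) `f` shifted by one de Bruijn level, with `a` at index `0`: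
what the semantics and the syntactic operations pass under a binder. -/
def extendEnv {α : Type*} (a : α) (f : ℕ → α) : ℕ → α
  | 0 => a
  | m + 1 => f m

@[simp]
theorem extendEnv_zero {α : Type*} (a : α) (f : ℕ → α) : extendEnv a f 0 = a := rfl

@[simp]
theorem extendEnv_succ {α : Type*} (a : α) (f : ℕ → α) (m : ℕ) : extendEnv a f (m + 1) = f m := rfl

theorem extendEnv_mono {α : Type*} [Preorder α] {a b : α} {f g : ℕ → α} (hab : a ≤ b)
    (hfg : f ≤ g) : extendEnv a f ≤ extendEnv b g
  | 0 => hab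
  | m + 1 => hfg m

theorem comp_extendEnv {α β : Type*} (g : α → β) (a : α) (f : ℕ → α) :
    (fun n => g (extendEnv a f n)) = extendEnv (g a) (fun n => g (f n)) :=
  funext fun | 0 => rfl | _ + 1 => rfl

namespace LTL

variable {P : Type}

theorem sem_var (n : ℕ) (σ : Stream' (Finset P)) (ρ : ℕ → Set ℕ) : sem (var n) σ ρ = ρ n := rfl

theorem sem_mu (φ : LTL P) (σ : Stream' (Finset P)) (ρ : ℕ → Set ℕ) :
    sem (mu φ) σ ρ = ⋂₀ {S | sem φ σ (extendEnv S ρ) ⊆ S} := rfl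

theorem sem_nu (φ : LTL P) (σ : Stream' (Finset P)) (ρ : ℕ → Set ℕ) :
    sem (nu φ) σ ρ = ⋃₀ {S | S ⊆ sem φ σ (extendEnv S ρ)} := rfl

theorem sem_monotone (φ : LTL P) (σ : Stream' (Finset P)) : Monotone (sem φ σ) := by
  induction φ with
  | bot | top | pos | neg => exact monotone_const
  | var n => exact Function.monotone_eval n
  | or φ ψ ihφ ihψ => exact ihφ.sup ihψ
  | and φ ψ ihφ ihψ => exact ihφ.inf ihψ
  | next φ ih => exact fun _ _ h _ hk => ih h hk
  | mu φ ih =>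
    intro ρ ρ' h
    rw [sem_mu, sem_mu]
    exact Set.sInter_subset_sInter fun _ hS => (ih (extendEnv_mono le_rfl h)).trans hS
  | nu φ ih =>
    intro ρ ρ' h
    rw [sem_nu, sem_nu]
    exact Set.sUnion_subset_sUnion fun _ hS => hS.trans (ih (extendEnv_mono le_rfl h))

theorem sem_extendEnv (φ : LTL P) (τ : ℕ → LTL P) (σ : Stream' (Finset P)) (ρ : ℕ → Set ℕ) :
    (fun n => sem (extendEnv φ τ n) σ ρ) = extendEnv (sem φ σ ρ) (fun n => sem (τ n) σ ρ) :=
  comp_extendEnv (sem · σ ρ) φ τ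

theorem rename_mu (r : ℕ → ℕ) (φ : LTL P) :
    rename r (mu φ) = mu (rename (extendEnv 0 fun n => r n + 1) φ) := rfl

theorem rename_nu (r : ℕ → ℕ) (φ : LTL P) :
    rename r (nu φ) = nu (rename (extendEnv 0 fun n => r n + 1) φ) := rfl

theorem sem_rename (r : ℕ → ℕ) (φ : LTL P) (σ : Stream' (Finset P)) (ρ : ℕ → Set ℕ) :
    sem (rename r φ) σ ρ = sem φ σ (fun n => ρ (r n)) := by
  induction φ generalizing r ρ with
  | bot | top | pos | neg | var => rfl
  | or φ ψ ihφ ihψ | and φ ψ ihφ ihψ => simp only [rename, sem, ihφ, ihψ]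
  | next φ ih => simp only [rename, sem, ih]
  | mu φ ih =>
    simp only [rename_mu, sem_mu, ih, comp_extendEnv (extendEnv _ ρ), extendEnv_zero,
      extendEnv_succ]
  | nu φ ih =>
    simp only [rename_nu, sem_nu, ih, comp_extendEnv (extendEnv _ ρ), extendEnv_zero,
      extendEnv_succ]

theorem msubst_mu (τ : ℕ → LTL P) (φ : LTL P) :
    msubst τ (mu φ) = mu (msubst (extendEnv (var 0) fun n => rename (· + 1) (τ n)) φ) := rfl

theorem msubst_nu (τ : ℕ → LTL P) (φ : LTL P) :
    msubst τ (nu φ) = nu (msubst (extendEnv (var 0) fun n => rename (· + 1) (τ n)) φ) := rfl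

theorem sem_msubst (τ : ℕ → LTL P) (φ : LTL P) (σ : Stream' (Finset P)) (ρ : ℕ → Set ℕ) :
    sem (msubst τ φ) σ ρ = sem φ σ (fun n => sem (τ n) σ ρ) := by
  induction φ generalizing τ ρ with
  | bot | top | pos | neg | var => rfl
  | or φ ψ ihφ ihψ | and φ ψ ihφ ihψ => simp only [msubst, sem, ihφ, ihψ]
  | next φ ih => simp only [msubst, sem, ih]
  | mu φ ih =>
    simp only [msubst_mu, sem_mu, ih, sem_extendEnv, sem_rename, sem_var, extendEnv_zero,
      extendEnv_succ]
  | nu φ ih =>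
    simp only [msubst_nu, sem_nu, ih, sem_extendEnv, sem_rename, sem_var, extendEnv_zero,
      extendEnv_succ]

theorem sem_subst0 (χ φ : LTL P) (σ : Stream' (Finset P)) (ρ : ℕ → Set ℕ) :
    sem (subst0 χ φ) σ ρ = sem φ σ (extendEnv (sem χ σ ρ) ρ) :=
  (sem_msubst (extendEnv χ var) φ σ ρ).trans <| by simp only [sem_extendEnv, sem_var]

theorem mem_sem_bigAnd {l : List (LTL P)} {σ : Stream' (Finset P)} {ρ : ℕ → Set ℕ} {k : ℕ} :
    k ∈ sem (bigAnd l) σ ρ ↔ ∀ ψ ∈ l, k ∈ sem ψ σ ρ := by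
  induction l with
  | nil => simp [bigAnd, sem]
  | cons φ l ih =>
    rw [List.forall_mem_cons, ← ih]
    rfl

end LTL

/-- The interpretation `L^σ = {k | σᵏ ∈ L}` of a language constant `L` over the word `σ`. -/
def constSem {A : Type*} (L : Set (Stream' A)) (σ : Stream' A) : Set ℕ :=
  (Stream'.drop · σ) ⁻¹' L

theorem mem_constSem_image_cons {A : Type*} {a : A} {L : Set (Stream' A)} {σ : Stream' A} {k : ℕ} :
    k ∈ constSem (Stream'.cons a '' L) σ ↔ σ.get k = a ∧ k + 1 ∈ constSem L σ := by
  have cons_drop : Stream'.cons (σ.get k) (σ.drop (k + 1)) = σ.drop k := by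
    simpa using Stream'.eta (σ.drop k)
  constructor
  · rintro ⟨w, hw, hk⟩
    obtain ⟨rfl, rfl⟩ := Stream'.cons_injective2 (hk.trans cons_drop.symm)
    exact ⟨rfl, hw⟩
  · rintro ⟨rfl, hk⟩
    exact ⟨σ.drop (k + 1), hk, cons_drop⟩

section Translation

variable {P : Type} [Fintype P] [DecidableEq P]

theorem mem_sem_toLTL_act {a : Finset P} {e : Expr (Finset P)} {σ : Stream' (Finset P)}
    {ρ : ℕ → Set ℕ} {k : ℕ} :
    k ∈ LTL.sem (toLTL (.act a e)) σ ρ ↔ σ.get k = a ∧ k + 1 ∈ LTL.sem (toLTL e) σ ρ := by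
  have mem_and : k ∈ LTL.sem (toLTL (.act a e)) σ ρ ↔
      (∀ p ∈ a, p ∈ σ.get k) ∧ (∀ p ∉ a, p ∉ σ.get k) ∧ k + 1 ∈ LTL.sem (toLTL e) σ ρ := by
    simp [toLTL, LTL.sem, LTL.mem_sem_bigAnd]
  have letter_iff : σ.get k = a ↔ (∀ p ∈ a, p ∈ σ.get k) ∧ ∀ p ∉ a, p ∉ σ.get k := by
    grind
  rw [mem_and, letter_iff, and_assoc]

theorem constSem_subset_sem_toLTL (e : Expr (Finset P)) (σ : Stream' (Finset P))
    {η : ℕ → Set (Stream' (Finset P))} {ρ : ℕ → Set ℕ} (h : ∀ n, constSem (η n) σ ⊆ ρ n) :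
    constSem (Lang e η) σ ⊆ LTL.sem (toLTL e) σ ρ := by
  induction e generalizing η ρ with
  | var n => exact h n
  | act a e ih =>
    exact fun _ hk => mem_sem_toLTL_act.2 ((mem_constSem_image_cons.1 hk).imp_right (ih h ·))
  | plus e f ihe ihf => exact Set.union_subset_union (ihe h) (ihf h)
  | inter e f ihe ihf => exact Set.inter_subset_inter (ihe h) (ihf h)
  | mu e ih =>
    refine Set.subset_sInter fun T hT => ?_
    -- The largest language whose interpretation over `σ` is contained in `T`.
    let K := Set.kernImage (Stream'.drop · σ) T
    have hK : constSem K σ ⊆ T := Set.preimage_kernImage.l_u_le T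
    have lang_subset : Lang e (extendEnv K η) ⊆ K :=
      Set.subset_kernImage_iff.2 <| (ih fun | 0 => hK | m + 1 => h m).trans hT
    exact (Set.preimage_mono (Set.sInter_subset_of_mem lang_subset)).trans hK
  | nu e ih =>
    rintro k ⟨S, hS, hk⟩
    have subset_sem : constSem S σ ⊆ LTL.sem (toLTL e) σ (extendEnv (constSem S σ) ρ) :=
      (Set.preimage_mono hS).trans (ih fun | 0 => subset_rfl | m + 1 => h m)
    exact ⟨constSem S σ, subset_sem, hk⟩

theorem mixed_substitution_general (φ : LTL P) (χ : Expr (Finset P)) (σ : Stream' (Finset P))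
    {η : ℕ → Set (Stream' (Finset P))} {ρ : ℕ → Set ℕ} (h : ∀ n, constSem (η n) σ ⊆ ρ n) :
    LTL.sem φ σ (extendEnv (constSem (Lang χ η) σ) ρ)
      ⊆ LTL.sem (LTL.subst0 (toLTL χ) φ) σ ρ := by
  rw [LTL.sem_subst0]
  exact LTL.sem_monotone φ σ (extendEnv_mono (constSem_subset_sem_toLTL χ σ h) le_rfl)

end Translation

/-- Mixed substitution lemma: for every μLTL formula `φ(X)`
(with `X` the variable of de Bruijn index 0), every closed RLL expression `χ`
and every ω-word `σ`, `(φ(L(χ)))^σ ⊆ (φ(χ°))^σ`.  Here the language constant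
`L(χ)` is interpreted at time `n` by whether the `n`-th tail of `σ` belongs to
`L(χ)`, i.e. it is evaluated via the environment sending `X` to
`{n | σⁿ ∈ L(χ)}`. -/
theorem mixed_substitution {P : Type} [Fintype P] [DecidableEq P]
    (φ : LTL P) (χ : Expr (Finset P)) (hχ : χ.Closed)
    (σ : Stream' (Finset P)) (ρ : ℕ → Set ℕ) :
    LTL.sem φ σ
        (fun n => match n with
          | 0 => {k : ℕ | Stream'.drop k σ ∈ lang χ}
          | m+1 => ρ m)
      ⊆ LTL.sem (LTL.subst0 (toLTL χ) φ) σ ρ :=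
  mixed_substitution_general φ χ σ (η := fun _ => ∅) fun _ => Set.empty_subset _

end RLLPaper
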